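/- arXiv:1704.06950 — 2 statements merged into one kernel-verified Lean document; each statement's English description precedes it below -/
import Mathlib

section
/- If T is a self-adjoint operator in H with T₀ ⊆ T ⊆ T₁ (i.e., D(T₀) ⊆ D(T) ⊆ D(T₁) and T agrees with T₁ on D(T)), then L := {φx : x ∈ D(T)} is a complete Lagrangian subspace of the boundary space S′ of dimension def(T₀), and φ⁻¹(L) = D(T). -/
open scoped ComplexInnerProductSpace

noncomputable section

variable {H : Type*} [NormedAddCommGroup H] [InnerProductSpace ℂ H] [CompleteSpace H]

/-- The symplectic form `[x,y]_H = ⟪T₁x, y⟫_H - ⟪x, T₁y⟫_H` on the domain of `T₁`. -/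
def sympForm (T₁ : H →ₗ.[ℂ] H) (x y : T₁.domain) : ℂ :=
  ⟪T₁ x, (y : H)⟫ - ⟪(x : H), T₁ y⟫

/-- The deficiency space `{x ∈ D(T₁) | T₁ x = c • x}`; `X₊ = defSpace T₁ I`,
`X₋ = defSpace T₁ (-I)`. -/
def defSpace (T₁ : H →ₗ.[ℂ] H) (c : ℂ) : Submodule ℂ T₁.domain :=
  LinearMap.ker (T₁.toFun - c • T₁.domain.subtype)

/-- The deficiency index `def(T₀) := dim X₊`. -/
def defIndex (T₁ : H →ₗ.[ℂ] H) : ℕ :=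
  Module.finrank ℂ (defSpace T₁ Complex.I)

/-- `D(T₀)` regarded as a submodule of `D(T₁)` (assuming `T₀ ≤ T₁`); the boundary
space is `S' := D(T₁) ⧸ D0 T₀ T₁` and `φ` is `Submodule.Quotient.mk`. -/
def D0 (T₀ T₁ : H →ₗ.[ℂ] H) : Submodule ℂ T₁.domain :=
  T₀.domain.comap T₁.domain.subtype

/-- A family `t₁, …, t_d ∈ D(T₁)` is a (partial) GKN family for `T₀` if it is linearly
independent modulo `D(T₀)` and satisfies the symmetry conditions `[tᵢ,tⱼ]_H = 0`. -/
def IsGKNFamily (T₀ T₁ : H →ₗ.[ℂ] H) {d : ℕ} (t : Fin d → T₁.domain) : Prop :=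
  (∀ α : Fin d → ℂ, ((∑ j, α j • t j : T₁.domain) : H) ∈ T₀.domain → ∀ j, α j = 0) ∧
  ∀ i j, sympForm T₁ (t i) (t j) = 0

/-- A subspace `L` of the boundary space `S' = D(T₁)/D(T₀)` is Lagrangian:
`[u : v]_{S'} = 0` for all `u, v ∈ L` (expressed via representatives). -/
def IsLagrangianRep (T₀ T₁ : H →ₗ.[ℂ] H) (L : Submodule ℂ (T₁.domain ⧸ D0 T₀ T₁)) : Prop :=
  ∀ x y : T₁.domain, Submodule.Quotient.mk (p := D0 T₀ T₁) x ∈ L →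
    Submodule.Quotient.mk (p := D0 T₀ T₁) y ∈ L → sympForm T₁ x y = 0

/-- A subspace `L ⊆ S'` is complete (as a Lagrangian): if `[u : v]_{S'} = 0` for all
`v ∈ L` then `u ∈ L` (expressed via representatives, `φ` being surjective). -/
def IsCompleteRep (T₀ T₁ : H →ₗ.[ℂ] H) (L : Submodule ℂ (T₁.domain ⧸ D0 T₀ T₁)) : Prop :=
  ∀ x : T₁.domain,
    (∀ y : T₁.domain, Submodule.Quotient.mk (p := D0 T₀ T₁) y ∈ L → sympForm T₁ x y = 0) →
    Submodule.Quotient.mk (p := D0 T₀ T₁) x ∈ L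

/-- `T - c` is onto for a self-adjoint operator `T` and `c = ± i`. -/
lemma sa_surj (T : H →ₗ.[ℂ] H) (hT : T.adjoint = T) (c : ℂ)
    (hc : (starRingEnd ℂ) c = -c) (hc1 : ‖c‖ = 1) (z : H) :
    ∃ x : T.domain, T x - c • (x : H) = z := by
  have hsa : IsSelfAdjoint T := hT
  have hd : Dense (T.domain : Set H) := hsa.dense_domain
  have hcl : T.IsClosed := hsa.isClosed
  have hfa : T.IsFormalAdjoint T := by
    have := LinearPMap.adjoint_isFormalAdjoint hd
    rwa [hT] at this
  have hc0 : c ≠ 0 := by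
    rintro rfl
    simp at hc1
  have hnorm : ∀ x : T.domain, ‖T x - c • (x : H)‖ ^ 2 = ‖T x‖ ^ 2 + ‖(x : H)‖ ^ 2 := by
    intro x
    have h1 : ⟪T x, (x : H)⟫ = ⟪(x : H), T x⟫ := hfa x x
    have h2 : (starRingEnd ℂ) ⟪T x, (x : H)⟫ = ⟪T x, (x : H)⟫ := by
      rw [inner_conj_symm, h1]
    have h3 : RCLike.re ⟪T x, c • (x : H)⟫ = 0 := by
      rw [inner_smul_right]
      have h4 : (starRingEnd ℂ) (c * ⟪T x, (x : H)⟫) = - (c * ⟪T x, (x : H)⟫) := by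
        rw [map_mul, hc, h2]; ring
      have h5 := congrArg Complex.re h4
      simp only [Complex.conj_re, Complex.neg_re] at h5
      change (c * ⟪T x, (x : H)⟫).re = 0
      linarith
    rw [@norm_sub_sq ℂ, h3, norm_smul, hc1]
    ring
  let f : T.graph →L[ℂ] H :=
    (ContinuousLinearMap.snd ℂ H H - c • ContinuousLinearMap.fst ℂ H H).comp T.graph.subtypeL
  have hf : ∀ p : T.graph, f p = p.1.2 - c • p.1.1 := fun p => rfl
  have hanti : AntilipschitzWith 1 f := by
    refine AddMonoidHomClass.antilipschitz_of_bound f ?_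
    rintro ⟨⟨a, b⟩, hp⟩
    obtain ⟨x, hx1, hx2⟩ := (LinearPMap.mem_graph_iff T).1 hp
    simp only at hx1 hx2
    subst hx1 hx2
    have := hnorm x
    rw [hf]
    simp only [NNReal.coe_one, one_mul]
    change max ‖(x : H)‖ ‖T x‖ ≤ _
    apply max_le
    · apply abs_le_of_sq_le_sq' _ (norm_nonneg _) |>.2
      nlinarith [sq_nonneg ‖T x‖]
    · apply abs_le_of_sq_le_sq' _ (norm_nonneg _) |>.2
      nlinarith [sq_nonneg ‖(x : H)‖]
  have : CompleteSpace T.graph := IsClosed.completeSpace_coe (hs := hcl)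
  have hclosed : IsClosed (Set.range f) := hanti.isClosed_range f.uniformContinuous
  have htop : (LinearMap.range f.toLinearMap) = ⊤ := by
    have hcl' : IsClosed ((LinearMap.range f.toLinearMap : Submodule ℂ H) : Set H) := by
      exact hclosed
    have : CompleteSpace (LinearMap.range f.toLinearMap) := hcl'.completeSpace_coe
    rw [← Submodule.orthogonal_eq_bot_iff, Submodule.eq_bot_iff]
    intro y hy
    have hy' : ∀ x : T.domain, ⟪(starRingEnd ℂ) c • y, (x : H)⟫ = ⟪y, T x⟫ := by
      intro x
      have h := (Submodule.mem_orthogonal' _ _).1 hy (T x - c • (x : H))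
        ⟨⟨((x : H), T x), T.mem_graph x⟩, rfl⟩
      rw [inner_sub_right, inner_smul_right, sub_eq_zero] at h
      rw [inner_smul_left, h]; simp
    have hmem : y ∈ T.adjoint.domain := LinearPMap.mem_adjoint_domain_of_exists y ⟨_, hy'⟩
    have hval := LinearPMap.adjoint_apply_eq hd ⟨y, hmem⟩ hy'
    have hgr : (y, (starRingEnd ℂ) c • y) ∈ T.graph := by
      have := T.adjoint.mem_graph ⟨y, hmem⟩
      rw [hval] at this
      exact hT ▸ (show (y, (starRingEnd ℂ) c • y) ∈ T.adjoint.graph from this)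
    obtain ⟨x, hx1, hx2⟩ := (LinearPMap.mem_graph_iff T).1 hgr
    simp only at hx1 hx2
    have h6 := hfa x x
    rw [hx2, hx1, inner_smul_left, inner_smul_right, hc, map_neg, hc] at h6
    have h7 : (2 * c) * ⟪y, y⟫ = 0 := by linear_combination h6
    simpa [hc0] using h7
  have : z ∈ LinearMap.range f.toLinearMap := htop ▸ Submodule.mem_top
  obtain ⟨⟨⟨a, b⟩, hp⟩, rfl⟩ := this
  obtain ⟨x, hx1, hx2⟩ := (LinearPMap.mem_graph_iff T).1 hp
  simp only at hx1 hx2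
  subst hx1 hx2
  exact ⟨x, rfl⟩

/-- An element of `D(T₁)` annihilated by the form against `D(T)` lies in `D(T*)`. -/
lemma mem_adj_of_symp (T T₁ : H →ₗ.[ℂ] H) (hle : T ≤ T₁) (x : T₁.domain)
    (h : ∀ y : T₁.domain, (y : H) ∈ T.domain → sympForm T₁ x y = 0) :
    (x : H) ∈ T.adjoint.domain := by
  refine LinearPMap.mem_adjoint_domain_of_exists _ ⟨T₁ x, fun y => ?_⟩
  have h1 := h ⟨y, hle.1 y.2⟩ y.2
  have h2 : T y = T₁ ⟨y, hle.1 y.2⟩ := hle.2 rfl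
  rw [h2]
  exact sub_eq_zero.1 h1

lemma sympForm_add_right (T₁ : H →ₗ.[ℂ] H) (x y z : T₁.domain) :
    sympForm T₁ x (y + z) = sympForm T₁ x y + sympForm T₁ x z := by
  simp only [sympForm, LinearPMap.map_add, Submodule.coe_add, inner_add_right]
  ring

/-!
STATEMENT 6: if `T` is a self-adjoint operator with `T₀ ⊆ T ⊆ T₁`, then
`L := {φx : x ∈ D(T)}` is a complete Lagrangian subspace of `S'` of dimension
`def(T₀)`, and `φ⁻¹(L) = D(T)`.
-/
theorem selfAdjoint_extension_gives_complete_lagrangian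
    (T₀ T₁ : H →ₗ.[ℂ] H)
    (hdense : Dense (T₀.domain : Set H))
    (hsymm : T₀.IsFormalAdjoint T₀)
    (hclosed : T₀.IsClosed)
    (hT₁ : T₁ = T₀.adjoint)
    (hT₁adj : T₁.adjoint = T₀)
    (hle : T₀ ≤ T₁)
    [FiniteDimensional ℂ (defSpace T₁ Complex.I)]
    [FiniteDimensional ℂ (defSpace T₁ (-Complex.I))]
    (hpos : 1 ≤ defIndex T₁)
    (heq : Module.finrank ℂ (defSpace T₁ Complex.I)
         = Module.finrank ℂ (defSpace T₁ (-Complex.I)))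
    (T : H →ₗ.[ℂ] H)
    (hTsa : T.adjoint = T)
    (hT₀T : T₀ ≤ T) (hTT₁ : T ≤ T₁) :
    IsLagrangianRep T₀ T₁
        (Submodule.map (D0 T₀ T₁).mkQ (T.domain.comap T₁.domain.subtype)) ∧
    IsCompleteRep T₀ T₁
        (Submodule.map (D0 T₀ T₁).mkQ (T.domain.comap T₁.domain.subtype)) ∧
    Module.finrank ℂ
        (Submodule.map (D0 T₀ T₁).mkQ (T.domain.comap T₁.domain.subtype)) = defIndex T₁ ∧
    {x : T₁.domain | Submodule.Quotient.mk (p := D0 T₀ T₁) x ∈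
        Submodule.map (D0 T₀ T₁).mkQ (T.domain.comap T₁.domain.subtype)} =
      {x : T₁.domain | (x : H) ∈ T.domain} := by
  have hsa : IsSelfAdjoint T := hTsa
  have hd : Dense (T.domain : Set H) := hsa.dense_domain
  have hfa : T.IsFormalAdjoint T := by
    have := LinearPMap.adjoint_isFormalAdjoint hd
    rwa [hTsa] at this
  have hval : ∀ (x : T.domain) (y : T₁.domain), (x : H) = y → T x = T₁ y :=
    fun x y h => hTT₁.2 h
  have hmem : ∀ x : T₁.domain, Submodule.Quotient.mk (p := D0 T₀ T₁) x ∈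
      Submodule.map (D0 T₀ T₁).mkQ (T.domain.comap T₁.domain.subtype) ↔ (x : H) ∈ T.domain := by
    intro x
    constructor
    · rintro ⟨y, hy, hxy⟩
      have h1 : y - x ∈ D0 T₀ T₁ := (Submodule.Quotient.eq _).1 hxy
      have h2 : ((y - x : T₁.domain) : H) ∈ T.domain := hT₀T.1 h1
      have h3 : (y : H) ∈ T.domain := hy
      have := T.domain.sub_mem h3 h2
      simpa using this
    · intro hx
      exact ⟨x, hx, rfl⟩
  have hlag : ∀ x y : T₁.domain, (x : H) ∈ T.domain → (y : H) ∈ T.domain →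
      sympForm T₁ x y = 0 := by
    intro x y hx hy
    have := hfa ⟨x, hx⟩ ⟨y, hy⟩
    rw [hval ⟨x, hx⟩ x rfl, hval ⟨y, hy⟩ y rfl] at this
    exact sub_eq_zero.2 this
  refine ⟨fun x y hx hy => hlag x y ((hmem x).1 hx) ((hmem y).1 hy), ?_, ?_, ?_⟩
  · intro x hx
    rw [hmem]
    have := mem_adj_of_symp T T₁ hTT₁ x (fun y hy => hx y ((hmem y).2 hy))
    rwa [hTsa] at this
  · let K : Submodule ℂ T₁.domain := T.domain.comap T₁.domain.subtype
    let E : Submodule ℂ H := (defSpace T₁ Complex.I).map T₁.domain.subtype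
    have hE : Module.finrank ℂ E = defIndex T₁ :=
      (Submodule.equivMapOfInjective _ T₁.domain.injective_subtype _).finrank_eq.symm
    let A : K →ₗ[ℂ] H := (T₁.toFun + Complex.I • T₁.domain.subtype) ∘ₗ K.subtype
    have hA : ∀ x : K, A x = T₁ x.1 + Complex.I • (x.1 : H) := fun x => rfl
    let g : K →ₗ[ℂ] E := E.orthogonalProjectionOnto.toLinearMap ∘ₗ A
    let h : K →ₗ[ℂ] (T₁.domain ⧸ D0 T₀ T₁) := (D0 T₀ T₁).mkQ ∘ₗ K.subtype
    have hgA : ∀ x : K, g x = E.orthogonalProjectionOnto (A x) := fun x => rfl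
    clear_value g A
    have hAs : ∀ z : H, ∃ x : K, A x = z := by
      intro z
      obtain ⟨x, hx⟩ := sa_surj T hTsa (-Complex.I) (by simp) (by simp) z
      refine ⟨⟨⟨x, hTT₁.1 x.2⟩, x.2⟩, ?_⟩
      rw [hA, ← hx, hval x ⟨x, hTT₁.1 x.2⟩ rfl]
      simp
    have hgs : LinearMap.range g = ⊤ := by
      rw [LinearMap.range_eq_top]
      intro e
      obtain ⟨x, hx⟩ := hAs e
      refine ⟨x, ?_⟩
      rw [hgA, hx]
      exact Submodule.orthogonalProjectionOnto_mem_subspace_eq_self e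
    have hpair : ∀ (x : K) (y : T₁.domain), y ∈ defSpace T₁ Complex.I →
        sympForm T₁ x.1 y = ⟪A x, (y : H)⟫ := by
      intro x y hy
      have hy' : T₁ y = Complex.I • (y : H) := sub_eq_zero.1 hy
      rw [sympForm, hy', hA, inner_add_left, inner_smul_left, inner_smul_right, Complex.conj_I]
      ring
    have hker : LinearMap.ker g = LinearMap.ker h := by
      ext x
      have hh : x ∈ LinearMap.ker h ↔ ((x.1 : T₁.domain) : H) ∈ T₀.domain := by
        rw [LinearMap.mem_ker]
        exact Submodule.Quotient.mk_eq_zero _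
      have hg : x ∈ LinearMap.ker g ↔ A x ∈ Eᗮ := by
        rw [LinearMap.mem_ker, hgA, Submodule.orthogonalProjectionOnto_eq_zero_iff]
      rw [hh, hg, Submodule.mem_orthogonal']
      constructor
      · intro hx
        have := mem_adj_of_symp T₁ T₁ le_rfl x.1 (fun y _ => ?_)
        · rwa [hT₁adj] at this
        obtain ⟨w, hw⟩ := sa_surj T hTsa Complex.I (by simp) (by simp)
          (T₁ y - Complex.I • (y : H))
        let w' : T₁.domain := ⟨w, hTT₁.1 w.2⟩
        have hw' : T w = T₁ w' := hval w w' rfl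
        have hu : y - w' ∈ defSpace T₁ Complex.I := by
          change T₁ (y - w') - Complex.I • ((y - w' : T₁.domain) : H) = 0
          have e1 : T₁ (y - w') = T₁ y - T₁ w' := T₁.map_sub y w'
          have e2 : ((y - w' : T₁.domain) : H) = y - w := rfl
          rw [e1, e2, ← hw', smul_sub, sub_sub_sub_comm, ← hw, sub_self]
        have hsum : y = w' + (y - w') := by abel
        rw [hsum, sympForm_add_right, hlag x.1 w' x.2 w.2, hpair x _ hu, zero_add]
        exact hx _ ⟨_, hu, rfl⟩
      · rintro hx _ ⟨y, hy, rfl⟩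
        change ⟪A x, (y : H)⟫ = 0
        rw [← hpair x y hy, sympForm, sub_eq_zero]
        have hd1 : T₁.IsFormalAdjoint T₀ := by
          rw [hT₁]; exact LinearPMap.adjoint_isFormalAdjoint hdense
        have h1 : T₀ ⟨_, hx⟩ = T₁ x.1 := hle.2 rfl
        rw [← h1]
        exact hd1.symm ⟨_, hx⟩ y
    have hrange : Submodule.map (D0 T₀ T₁).mkQ K = LinearMap.range h := by
      rw [LinearMap.range_comp, Submodule.range_subtype]
    change Module.finrank ℂ (Submodule.map (D0 T₀ T₁).mkQ K) = _
    rw [hrange, ← h.quotKerEquivRange.finrank_eq, ← hker, g.quotKerEquivRange.finrank_eq, hgs,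
      finrank_top, hE]
  · ext x
    exact hmem x
end
end

section
/- If t₁,…,t_m is a GKN set for T₀ (m = def(T₀)), then the operator T defined by Tx = T₁x on D(T) := {x ∈ D(T₁) : [x,tⱼ]_H = 0 for j = 1,…,m} is a self-adjoint operator in H satisfying T₀ ⊆ T ⊆ T₁. -/
open scoped ComplexInnerProductSpace

noncomputable section

variable {H : Type*} [NormedAddCommGroup H] [InnerProductSpace ℂ H] [CompleteSpace H]

/-- von Neumann decomposition: `D(T₁) = D(T₀) + X₊ + X₋`. -/
theorem vonNeumann_aux (T₀ T₁ : H →ₗ.[ℂ] H)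
    (hdense : Dense (T₀.domain : Set H)) (hclosed : T₀.IsClosed)
    (hT₁ : T₁ = T₀.adjoint) (hle : T₀ ≤ T₁) (x : T₁.domain) :
    ∃ p ∈ defSpace T₁ Complex.I, ∃ q ∈ defSpace T₁ (-Complex.I), x - (p + q) ∈ D0 T₀ T₁ := by
  let e := (WithLp.linearEquiv 2 ℂ (H × H)).symm
  let G : Submodule ℂ (WithLp 2 (H × H)) := T₀.graph.map e.toLinearMap
  have hG : IsClosed (G : Set (WithLp 2 (H × H))) := by
    simp only [G, Submodule.map_coe]
    rw [LinearEquiv.coe_coe, LinearEquiv.image_eq_preimage_symm]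
    exact IsClosed.preimage (WithLp.prod_continuous_ofLp _ _ _) hclosed
  have : CompleteSpace G := hG.completeSpace_coe
  obtain ⟨a, ha, b, hb, hab⟩ := G.exists_add_mem_mem_orthogonal (WithLp.toLp 2 ((x : H), T₁ x))
  obtain ⟨a', ha', rfl⟩ := ha
  obtain ⟨x0, hx0, hx0'⟩ := (LinearPMap.mem_graph_iff _).1 ha'
  have hx0V : (x0 : H) ∈ T₁.domain := hle.1 x0.2
  have hT0 : T₀ x0 = T₁ ⟨x0, hx0V⟩ := hle.2 rfl
  let y : T₁.domain := x - ⟨x0, hx0V⟩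
  have hbe : b = WithLp.toLp 2 ((y : H), T₁ y) := by
    have : b = WithLp.toLp 2 ((x : H), T₁ x) - e a' := by rw [hab]; simp
    rw [this]
    have h2 : a' = ((x0 : H), T₀ x0) := by rw [hx0, hx0']
    rw [h2, hT0]
    simp only [y, LinearPMap.map_sub]
    rfl
  have horth : ∀ z : T₀.domain, ⟪(y : H), (z : H)⟫ + ⟪T₁ y, T₀ z⟫ = 0 := by
    intro z
    have h := (Submodule.mem_orthogonal' _ _).1 hb (e ((z : H), T₀ z))
      (Submodule.mem_map_of_mem (LinearPMap.mem_graph _ z))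
    rw [hbe, WithLp.prod_inner_apply] at h
    exact h
  have hw : ∀ z : T₀.domain, ⟪-(y : H), (z : H)⟫ = ⟪T₁ y, T₀ z⟫ := by
    intro z
    rw [inner_neg_left]
    linear_combination -horth z
  have hmem' : T₁ y ∈ T₀.adjoint.domain := LinearPMap.mem_adjoint_domain_of_exists _ ⟨_, hw⟩
  have happ' := LinearPMap.adjoint_apply_eq hdense ⟨_, hmem'⟩ hw
  have hmem : T₁ y ∈ T₁.domain := (le_of_eq hT₁.symm).1 hmem'
  have happ : T₁ ⟨T₁ y, hmem⟩ = -(y : H) := by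
    rw [← happ']
    exact (le_of_eq hT₁).2 rfl
  let u : T₁.domain := ⟨T₁ y, hmem⟩
  have hu : T₁ u = -(y : H) := happ
  have huc : (u : H) = T₁ y := rfl
  refine ⟨(1/2 : ℂ) • (y - Complex.I • u), ?_, (1/2 : ℂ) • (y + Complex.I • u), ?_, ?_⟩
  · refine Submodule.smul_mem _ _ ?_
    rw [defSpace, LinearMap.mem_ker]
    change T₁ (y - Complex.I • u) - Complex.I • ((y : H) - Complex.I • (u : H)) = 0
    rw [LinearPMap.map_sub, LinearPMap.map_smul, hu, huc, smul_sub, smul_smul, Complex.I_mul_I]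
    module
  · refine Submodule.smul_mem _ _ ?_
    rw [defSpace, LinearMap.mem_ker]
    change T₁ (y + Complex.I • u) - (-Complex.I) • ((y : H) + Complex.I • (u : H)) = 0
    rw [LinearPMap.map_add, LinearPMap.map_smul, hu, huc, smul_add, smul_smul, neg_mul,
      Complex.I_mul_I]
    module
  · have : x - ((1/2 : ℂ) • (y - Complex.I • u) + (1/2 : ℂ) • (y + Complex.I • u))
        = ⟨x0, hx0V⟩ := by
      have h3 : (1/2 : ℂ) • (y - Complex.I • u) + (1/2 : ℂ) • (y + Complex.I • u) = y := by module
      rw [h3]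
      simp [y]
    rw [this]
    exact x0.2

/-- `[s, ·]` as a linear functional. -/
def sympLin (T₁ : H →ₗ.[ℂ] H) (s : T₁.domain) : T₁.domain →ₗ[ℂ] ℂ where
  toFun y := sympForm T₁ s y
  map_add' y z := by
    simp only [sympForm, LinearPMap.map_add, Submodule.coe_add, inner_add_right]; ring
  map_smul' c y := by
    simp only [sympForm, LinearPMap.map_smul, Submodule.coe_smul, inner_smul_right,
      RingHom.id_apply, smul_eq_mul]; ring

theorem sympForm_conj (T₁ : H →ₗ.[ℂ] H) (x y : T₁.domain) :
    sympForm T₁ x y = - (starRingEnd ℂ) (sympForm T₁ y x) := by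
  simp [sympForm]

theorem sympForm_eq_zero_comm (T₁ : H →ₗ.[ℂ] H) (x y : T₁.domain) :
    sympForm T₁ x y = 0 ↔ sympForm T₁ y x = 0 := by
  rw [sympForm_conj]; simp

theorem sympForm_sum_left (T₁ : H →ₗ.[ℂ] H) {n : ℕ} (c : Fin n → ℂ) (t : Fin n → T₁.domain)
    (y : T₁.domain) :
    sympForm T₁ (∑ j, (starRingEnd ℂ) (c j) • t j) y = ∑ j, c j * sympForm T₁ (t j) y := by
  rw [sympForm_conj]
  change -(starRingEnd ℂ) (sympLin T₁ y _) = _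
  rw [map_sum, map_sum, ← Finset.sum_neg_distrib]
  refine Finset.sum_congr rfl fun j _ => ?_
  rw [map_smul, sympForm_conj T₁ (t j) y, smul_eq_mul, map_mul, Complex.conj_conj]
  change -(c j * (starRingEnd ℂ) (sympForm T₁ y (t j))) = _
  ring

theorem GKN_isotropic_aux (T₀ T₁ : H →ₗ.[ℂ] H)
    (hdense : Dense (T₀.domain : Set H)) (hclosed : T₀.IsClosed)
    (hT₁ : T₁ = T₀.adjoint) (hT₁adj : T₁.adjoint = T₀) (hle : T₀ ≤ T₁)
    [FiniteDimensional ℂ (defSpace T₁ Complex.I)]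
    [FiniteDimensional ℂ (defSpace T₁ (-Complex.I))]
    (heq : Module.finrank ℂ (defSpace T₁ Complex.I)
         = Module.finrank ℂ (defSpace T₁ (-Complex.I)))
    (t : Fin (defIndex T₁) → T₁.domain)
    (ht : IsGKNFamily T₀ T₁ t)
    (hD0 : ∀ x ∈ D0 T₀ T₁, ∀ y, sympForm T₁ x y = 0)
    (x y : T₁.domain) (hx : ∀ j, sympForm T₁ (t j) x = 0)
    (hy : ∀ j, sympForm T₁ (t j) y = 0) : sympForm T₁ x y = 0 := by
  let W := D0 T₀ T₁
  let Q := T₁.domain ⧸ W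
  let S := (defSpace T₁ Complex.I) × (defSpace T₁ (-Complex.I))
  let f : S →ₗ[ℂ] Q := W.mkQ ∘ₗ
    (LinearMap.coprod (defSpace T₁ Complex.I).subtype (defSpace T₁ (-Complex.I)).subtype)
  have hf : Function.Surjective f := by
    intro q
    obtain ⟨z, rfl⟩ := W.mkQ_surjective q
    obtain ⟨p, hp, r, hr, h⟩ := vonNeumann_aux T₀ T₁ hdense hclosed hT₁ hle z
    refine ⟨(⟨p, hp⟩, ⟨r, hr⟩), ?_⟩
    exact ((Submodule.Quotient.eq W).2 h).symm
  have : FiniteDimensional ℂ Q := Module.Finite.of_surjective f hf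
  have hQ : Module.finrank ℂ Q ≤ defIndex T₁ + defIndex T₁ := by
    refine (LinearMap.finrank_le_finrank_of_surjective hf).trans ?_
    rw [Module.finrank_prod, ← heq, defIndex]
  let Ψ : T₁.domain →ₗ[ℂ] (Fin (defIndex T₁) → ℂ) := LinearMap.pi fun j => sympLin T₁ (t j)
  have hΨ : W ≤ LinearMap.ker Ψ := by
    intro z hz
    rw [LinearMap.mem_ker]
    ext j
    exact (sympForm_eq_zero_comm _ _ _).1 (hD0 z hz _)
  let Φ : Q →ₗ[ℂ] (Fin (defIndex T₁) → ℂ) := W.liftQ Ψ hΨ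
  have hΦ : LinearMap.range Φ = ⊤ := by
    by_contra hne
    obtain ⟨g, hg, hgk⟩ := Submodule.exists_le_ker_of_lt_top _ (lt_top_iff_ne_top.2 hne)
    let c : Fin (defIndex T₁) → ℂ := fun j => g (Pi.single j 1)
    have hgc : ∀ v, g v = ∑ j, c j * v j := by
      intro v
      conv_lhs => rw [pi_eq_sum_univ' v]
      rw [map_sum]
      refine Finset.sum_congr rfl fun j _ => ?_
      rw [map_smul, smul_eq_mul, mul_comm]
    have h0 : ∀ z, sympForm T₁ (∑ j, (starRingEnd ℂ) (c j) • t j) z = 0 := by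
      intro z
      rw [sympForm_sum_left]
      have := hgk (LinearMap.mem_range_self Φ (W.mkQ z))
      rw [LinearMap.mem_ker, hgc] at this
      exact this
    have hm : ((∑ j, (starRingEnd ℂ) (c j) • t j : T₁.domain) : H) ∈ T₀.domain := by
      have : ((∑ j, (starRingEnd ℂ) (c j) • t j : T₁.domain) : H) ∈ T₁.adjoint.domain :=
        LinearPMap.mem_adjoint_domain_of_exists _ ⟨_, fun z => sub_eq_zero.1 (h0 z)⟩
      rwa [hT₁adj] at this
    have hc := ht.1 _ hm
    apply hg
    ext v
    have : ∀ j, c j = 0 := fun j => by simpa using hc j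
    simp [hgc, this]
  have hli : LinearIndependent ℂ (fun j => W.mkQ (t j)) := by
    rw [Fintype.linearIndependent_iff]
    intro α h
    refine ht.1 α ?_
    rw [← (by simp : W.mkQ (∑ j, α j • t j) = ∑ j, α j • W.mkQ (t j)),
      Submodule.mkQ_apply, Submodule.Quotient.mk_eq_zero] at h
    exact h
  have hspan : Submodule.span ℂ (Set.range fun j => W.mkQ (t j)) = LinearMap.ker Φ := by
    apply Submodule.eq_of_le_of_finrank_le
    · rw [Submodule.span_le]
      rintro _ ⟨j, rfl⟩
      change Φ (W.mkQ (t j)) = 0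
      ext i
      exact ht.2 i j
    · rw [finrank_span_eq_card hli, Fintype.card_fin]
      have := LinearMap.finrank_range_add_finrank_ker Φ
      rw [hΦ, finrank_top, Module.finrank_fin_fun] at this
      have h5 : Module.finrank ℂ (LinearMap.ker Φ) ≤ defIndex T₁ := by omega
      exact h5
  have hxk : W.mkQ x ∈ LinearMap.ker Φ := by
    rw [LinearMap.mem_ker]
    ext j
    exact hx j
  rw [← hspan, Submodule.mem_span_range_iff_exists_fun] at hxk
  obtain ⟨c, hc⟩ := hxk
  have hd : x - ∑ j, c j • t j ∈ W := by
    rw [← Submodule.Quotient.eq]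
    change W.mkQ x = W.mkQ _
    rw [← hc]; simp
  have h1 := (sympForm_eq_zero_comm _ _ _).1 (hD0 _ hd y)
  have h2 : sympForm T₁ y (∑ j, c j • t j) = 0 := by
    change sympLin T₁ y _ = 0
    rw [map_sum]
    refine Finset.sum_eq_zero fun j _ => ?_
    rw [map_smul]
    have : sympLin T₁ y (t j) = 0 := (sympForm_eq_zero_comm _ _ _).1 (hy j)
    rw [this, smul_zero]
  have h3 : sympLin T₁ y (x - ∑ j, c j • t j) = 0 := h1
  rw [map_sub] at h3
  refine (sympForm_eq_zero_comm _ _ _).1 ?_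
  change sympLin T₁ y x = 0
  change sympLin T₁ y _ = 0 at h2
  rw [h2, sub_zero] at h3
  exact h3

/-!
STATEMENT 9 (GKN-EM, sufficiency): if `t₁,…,t_m` is a GKN set for `T₀` (`m = def(T₀)`),
then the operator `T` with `Tx = T₁x` on
`D(T) := {x ∈ D(T₁) : [x,tⱼ]_H = 0, j = 1,…,m}` is self-adjoint and `T₀ ⊆ T ⊆ T₁`.
-/
theorem GKN_restriction_is_selfAdjoint
    (T₀ T₁ : H →ₗ.[ℂ] H)
    (hdense : Dense (T₀.domain : Set H))
    (hsymm : T₀.IsFormalAdjoint T₀)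
    (hclosed : T₀.IsClosed)
    (hT₁ : T₁ = T₀.adjoint)
    (hT₁adj : T₁.adjoint = T₀)
    (hle : T₀ ≤ T₁)
    [FiniteDimensional ℂ (defSpace T₁ Complex.I)]
    [FiniteDimensional ℂ (defSpace T₁ (-Complex.I))]
    (hpos : 1 ≤ defIndex T₁)
    (heq : Module.finrank ℂ (defSpace T₁ Complex.I)
         = Module.finrank ℂ (defSpace T₁ (-Complex.I)))
    (t : Fin (defIndex T₁) → T₁.domain)
    (ht : IsGKNFamily T₀ T₁ t) :
    ∃ T : H →ₗ.[ℂ] H, T.adjoint = T ∧ T₀ ≤ T ∧ T ≤ T₁ ∧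
      (T.domain : Set H) =
        Subtype.val '' {x : T₁.domain | ∀ j, sympForm T₁ x (t j) = 0} := by
  have hF : ∀ (x : T₁.domain) (z : T₀.domain), ⟪T₁ x, (z : H)⟫ = ⟪(x : H), T₀ z⟫ := by
    rw [hT₁]
    exact LinearPMap.adjoint_isFormalAdjoint hdense
  have hD0 : ∀ x ∈ D0 T₀ T₁, ∀ y, sympForm T₁ x y = 0 := by
    intro x hx y
    rw [sympForm_eq_zero_comm]
    have h := hF y ⟨x, hx⟩
    have h' : T₀ ⟨x, hx⟩ = T₁ x := hle.2 rfl
    rw [h'] at h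
    exact sub_eq_zero.2 h
  let K : Submodule ℂ T₁.domain := LinearMap.ker (LinearMap.pi fun j => sympLin T₁ (t j))
  have hK : ∀ x, x ∈ K ↔ ∀ j, sympForm T₁ (t j) x = 0 := by
    intro x
    rw [LinearMap.mem_ker]
    exact funext_iff
  let T : H →ₗ.[ℂ] H := T₁.domRestrict (K.map T₁.domain.subtype)
  have hTle : T ≤ T₁ := LinearPMap.domRestrict_le
  have hTd : ∀ x : T₁.domain, (x : H) ∈ T.domain ↔ x ∈ K := by
    intro x
    constructor
    · rintro ⟨⟨z, hz, hzx⟩, _⟩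
      have : z = x := Subtype.ext hzx
      exact this ▸ hz
    · intro h
      exact ⟨⟨x, h, rfl⟩, x.2⟩
  have hTa : ∀ x : T.domain, T x = T₁ ⟨x, hTle.1 x.2⟩ := fun x => hTle.2 rfl
  have hT0 : T₀ ≤ T := by
    have hd : T₀.domain ≤ T.domain := by
      intro z hz
      refine (hTd ⟨z, hle.1 hz⟩).2 ((hK _).2 fun j => ?_)
      exact (sympForm_eq_zero_comm _ _ _).1 (hD0 _ hz _)
    refine ⟨hd, fun x y hxy => ?_⟩
    rw [hTa]
    exact hle.2 hxy
  have hTdense : Dense (T.domain : Set H) := hdense.mono hT0.1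
  have hTsymm : T.IsFormalAdjoint T := by
    intro x y
    rw [hTa, hTa]
    refine sub_eq_zero.1 (GKN_isotropic_aux T₀ T₁ hdense hclosed hT₁ hT₁adj hle heq t ht hD0
      ⟨x, hTle.1 x.2⟩ ⟨y, hTle.1 y.2⟩ ?_ ?_)
    · exact (hK _).1 ((hTd ⟨x, hTle.1 x.2⟩).1 x.2)
    · exact (hK _).1 ((hTd ⟨y, hTle.1 y.2⟩).1 y.2)
  refine ⟨T, ?_, hT0, hTle, ?_⟩
  · have hle' := hTsymm.le_adjoint hTdense
    refine (LinearPMap.eq_of_le_of_domain_eq hle' (le_antisymm hle'.1 ?_)).symm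
    intro y hy
    have hfa := LinearPMap.adjoint_isFormalAdjoint hTdense ⟨y, hy⟩
    have hw : ∀ z : T₀.domain, ⟪T.adjoint ⟨y, hy⟩, (z : H)⟫ = ⟪y, T₀ z⟫ := by
      intro z
      have h1 := hfa ⟨z, hT0.1 z.2⟩
      have h2 : T₀ z = T ⟨z, hT0.1 z.2⟩ := hT0.2 rfl
      rw [h2]
      exact h1
    have hm' : y ∈ T₀.adjoint.domain := LinearPMap.mem_adjoint_domain_of_exists _ ⟨_, hw⟩
    have happ' := LinearPMap.adjoint_apply_eq hdense ⟨y, hm'⟩ hw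
    have hm : y ∈ T₁.domain := (le_of_eq hT₁.symm).1 hm'
    have happ : T₁ ⟨y, hm⟩ = T.adjoint ⟨y, hy⟩ := by
      rw [← happ']
      exact (le_of_eq hT₁).2 rfl
    refine (hTd ⟨y, hm⟩).2 ((hK _).2 fun j => ?_)
    rw [sympForm_eq_zero_comm]
    have htj : (t j : H) ∈ T.domain := (hTd (t j)).2 ((hK _).2 fun i => ht.2 i j)
    have h3 := hfa ⟨t j, htj⟩
    rw [hTa, ← happ] at h3
    exact sub_eq_zero.2 h3
  · ext x
    constructor
    · intro hx
      refine ⟨⟨x, hTle.1 hx⟩, fun j => ?_, rfl⟩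
      exact (sympForm_eq_zero_comm _ _ _).1 ((hK _).1 ((hTd ⟨x, hTle.1 hx⟩).1 hx) j)
    · rintro ⟨z, hz, rfl⟩
      exact (hTd z).2 ((hK _).2 fun j => (sympForm_eq_zero_comm _ _ _).1 (hz j))
end
end
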